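/- For every real τ > 0, setting q = e^{-π/τ}, one has (1 - √(3/2) · η(6iτ)η((3/2)iτ)/(η(2iτ)η(3iτ))) · η(2iτ) = (1/√(2τ)) · q^{1/24} · ∑_{k∈ℤ} (-1)^k ( q^{(3k²-k)/2} - q^{(2k²+k)/3} ). -/

import Mathlib

open scoped Real

noncomputable def eta (z : ℂ) : ℂ :=
  Complex.exp (Real.pi * Complex.I * z / 12) *
    ∏' n : ℕ, (1 - Complex.exp (2 * Real.pi * Complex.I * ((n : ℂ) + 1) * z))

/-!
The inversion `η(i/t) = √t η(it)` turns both terms of the left-hand side into theta series in the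
nome `q = exp (-π/τ)`. Indeed `√(2τ) η(2iτ) = η(i/(2τ))`, which Euler's pentagonal number theorem
expands, while `η(6iτ) η(3iτ/2) / η(3iτ)` becomes, up to a constant, `η(w) η(4w) / η(2w)` at
`w = i/(6τ)`, the product side of Gauss's identity for `∑ (-1)^k x^(k(2k+1))`. Both expansions are
specializations of Jacobi's triple product. The latter is the limit, by dominated convergence, of
the expansion of `∏_{i<m} (1 + z q^i) ∏_{i<n} (1 + z⁻¹ q^(i+1))`, whose coefficients are Gaussian
binomials; that expansion follows from the two `q`-Pascal recursions, one in `m` and one in `n`.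
-/

open Filter Topology

lemma hasProd_prod_range_mul_add {M : Type*} [CommMonoid M] [TopologicalSpace M] [ContinuousMul M]
    [RegularSpace M] {f : ℕ → M} {a : M} (hf : HasProd f a) (m : ℕ) [NeZero m] :
    HasProd (fun n ↦ ∏ i ∈ Finset.range m, f (n * m + i)) a := by
  simp only [Finset.prod_range]
  exact ((Nat.divModEquiv m).symm.hasProd_iff.2 hf).prod_fiberwise fun _ ↦ hasProd_fintype _

section Finite

variable {R 𝕜 : Type*} [CommRing R] [Field 𝕜]

/-- The finite `q`-Pochhammer symbol `(q; q)_n`. -/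
def qPochhammer (q : R) (n : ℕ) : R := ∏ i ∈ Finset.range n, (1 - q ^ (i + 1))

lemma qPochhammer_succ (q : R) (n : ℕ) :
    qPochhammer q (n + 1) = qPochhammer q n * (1 - q ^ (n + 1)) :=
  Finset.prod_range_succ _ n

/-- The reciprocal `1 / (q; q)_m`, extended to negative `m` by zero. -/
def recipQPochhammer (q : 𝕜) : ℤ → 𝕜
  | .ofNat n => (qPochhammer q n)⁻¹
  | .negSucc _ => 0

lemma recipQPochhammer_natCast (q : 𝕜) (n : ℕ) :
    recipQPochhammer q n = (qPochhammer q n)⁻¹ := rfl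

lemma recipQPochhammer_of_neg (q : 𝕜) {m : ℤ} (hm : m < 0) : recipQPochhammer q m = 0 := by
  cases m with
  | ofNat n => lia
  | negSucc n => rfl

lemma recipQPochhammer_sub_one {q : 𝕜} (hq : ∀ n, qPochhammer q n ≠ 0) (m : ℤ) :
    recipQPochhammer q (m - 1) = (1 - q ^ m) * recipQPochhammer q m := by
  rcases lt_trichotomy m 0 with hm | rfl | hm
  · rw [recipQPochhammer_of_neg q hm, recipQPochhammer_of_neg q (by lia), mul_zero]
  · rw [recipQPochhammer_of_neg q (by lia), zpow_zero, sub_self, zero_mul]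
  · obtain ⟨n, rfl⟩ : ∃ n : ℕ, m = (n + 1 : ℕ) := ⟨(m - 1).toNat, by lia⟩
    have hn := hq (n + 1)
    rw [qPochhammer_succ] at hn
    rw [Nat.cast_succ, add_sub_cancel_right, ← Nat.cast_succ, recipQPochhammer_natCast,
      recipQPochhammer_natCast, zpow_natCast, qPochhammer_succ, mul_inv, mul_left_comm,
      mul_inv_cancel₀ (right_ne_zero_of_mul hn), mul_one]

/-- The summand `q ^ (k(k-1)/2) * z ^ k` of the theta series in Jacobi's triple product; this
normalization avoids the square roots of `q` needed with `q ^ (k²/2)`. -/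
def jacobiTerm (q z : 𝕜) (k : ℤ) : 𝕜 := q ^ (k * (k - 1) / 2) * z ^ k

lemma jacobiTerm_ne_zero {q z : 𝕜} (hq : q ≠ 0) (hz : z ≠ 0) (k : ℤ) : jacobiTerm q z k ≠ 0 :=
  mul_ne_zero (zpow_ne_zero _ hq) (zpow_ne_zero _ hz)

lemma jacobiTerm_add_one {q z : 𝕜} (hq : q ≠ 0) (hz : z ≠ 0) (k : ℤ) :
    jacobiTerm q z (k + 1) = q ^ k * z * jacobiTerm q z k := by
  have hk : (k + 1) * (k + 1 - 1) / 2 = k * (k - 1) / 2 + k := by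
    rw [← Int.add_mul_ediv_right _ _ two_ne_zero]
    ring_nf
  rw [jacobiTerm, jacobiTerm, hk, zpow_add₀ hq, zpow_add_one₀ hz]
  ring

lemma jacobiTerm_neg {q : 𝕜} (hq : q ≠ 0) (z : 𝕜) (k : ℤ) :
    jacobiTerm q z (-k) = jacobiTerm q (q / z) k := by
  have hk : -k * (-k - 1) / 2 = k * (k - 1) / 2 + k := by
    rw [← Int.add_mul_ediv_right _ _ two_ne_zero]
    ring_nf
  rw [jacobiTerm, jacobiTerm, hk, zpow_add₀ hq, div_zpow, zpow_neg, mul_assoc, div_eq_mul_inv]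

/-- The coefficient of `z ^ k` in `∏_{i < m} (1 + z q ^ i) ∏_{i < n} (1 + z⁻¹ q ^ (i + 1))`, times
`z ^ k`: a Gaussian binomial coefficient `[m + n, n + k]_q` times `jacobiTerm q z k`. -/
def finiteJacobiTerm (q z : 𝕜) (m n : ℕ) (k : ℤ) : 𝕜 :=
  qPochhammer q (m + n) * recipQPochhammer q (m - k) * recipQPochhammer q (n + k) *
    jacobiTerm q z k

lemma finiteJacobiTerm_succ_left {q z : 𝕜} (hq0 : q ≠ 0) (hq : ∀ n, qPochhammer q n ≠ 0)
    (hz : z ≠ 0) (m n : ℕ) (k : ℤ) :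
    finiteJacobiTerm q z (m + 1) n k =
      finiteJacobiTerm q z m n k + z * q ^ m * finiteJacobiTerm q z m n (k - 1) := by
  have hm : recipQPochhammer q (m - k) =
      (1 - q ^ (m + 1 - k : ℤ)) * recipQPochhammer q (m + 1 - k) := by
    rw [← recipQPochhammer_sub_one hq]; ring_nf
  have hn : recipQPochhammer q (n + (k - 1)) =
      (1 - q ^ (n + k : ℤ)) * recipQPochhammer q (n + k) := by
    rw [← recipQPochhammer_sub_one hq]; ring_nf
  have hk : jacobiTerm q z k = q ^ (k - 1) * z * jacobiTerm q z (k - 1) := by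
    rw [← jacobiTerm_add_one hq0 hz, sub_add_cancel]
  simp only [finiteJacobiTerm, hm, hn, hk, Nat.cast_succ, add_right_comm m 1 n, qPochhammer_succ,
    show (m : ℤ) - (k - 1) = m + 1 - k by ring]
  simp only [zpow_add₀ hq0, zpow_sub₀ hq0, zpow_natCast, zpow_one]
  field_simp
  ring

lemma finiteJacobiTerm_succ_right {q z : 𝕜} (hq0 : q ≠ 0) (hq : ∀ n, qPochhammer q n ≠ 0)
    (hz : z ≠ 0) (m n : ℕ) (k : ℤ) :
    finiteJacobiTerm q z m (n + 1) k =
      finiteJacobiTerm q z m n k + z⁻¹ * q ^ (n + 1) * finiteJacobiTerm q z m n (k + 1) := by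
  have hm : recipQPochhammer q (m - (k + 1)) =
      (1 - q ^ (m - k : ℤ)) * recipQPochhammer q (m - k) := by
    rw [← recipQPochhammer_sub_one hq]; ring_nf
  have hn : recipQPochhammer q (n + k) =
      (1 - q ^ (n + 1 + k : ℤ)) * recipQPochhammer q (n + 1 + k) := by
    rw [← recipQPochhammer_sub_one hq]; ring_nf
  simp only [finiteJacobiTerm, hm, hn, jacobiTerm_add_one hq0 hz, Nat.cast_succ, ← add_assoc,
    qPochhammer_succ, add_right_comm (n : ℤ) k 1]
  simp only [zpow_add₀ hq0, zpow_sub₀ hq0, zpow_natCast, zpow_one]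
  field_simp
  ring

variable [TopologicalSpace 𝕜] [IsTopologicalSemiring 𝕜]

lemma hasSum_finiteJacobiTerm {q z : 𝕜} (hq0 : q ≠ 0) (hq : ∀ n, qPochhammer q n ≠ 0)
    (hz : z ≠ 0) (m n : ℕ) :
    HasSum (finiteJacobiTerm q z m n) ((∏ i ∈ Finset.range m, (1 + z * q ^ i)) *
      ∏ i ∈ Finset.range n, (1 + z⁻¹ * q ^ (i + 1))) := by
  induction m with
  | zero =>
    induction n with
    | zero =>
      have h0 : finiteJacobiTerm q z 0 0 0 = 1 := by
        simp [finiteJacobiTerm, jacobiTerm, qPochhammer, recipQPochhammer]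
      simp only [Finset.prod_range_zero, mul_one]
      rw [← h0]
      refine hasSum_single 0 fun k hk ↦ ?_
      rcases hk.lt_or_gt with hk | hk
      · simp [finiteJacobiTerm, recipQPochhammer_of_neg q hk]
      · simp [finiteJacobiTerm, recipQPochhammer_of_neg q (neg_lt_zero.2 hk)]
    | succ n ih =>
      have hshift := ((Equiv.addRight (1 : ℤ)).hasSum_iff.2 ih).mul_left (z⁻¹ * q ^ (n + 1))
      rw [funext (finiteJacobiTerm_succ_right hq0 hq hz 0 n)]
      convert! ih.add hshift using 1
      rw [Finset.prod_range_succ]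
      ring
  | succ m ih =>
    have hshift := ((Equiv.subRight (1 : ℤ)).hasSum_iff.2 ih).mul_left (z * q ^ m)
    rw [funext (finiteJacobiTerm_succ_left hq0 hq hz m n)]
    convert! ih.add hshift using 1
    rw [Finset.prod_range_succ]
    ring

end Finite

section Analytic

variable {𝕜 : Type*} [NormedField 𝕜]

lemma summable_norm_jacobiTerm_natCast {q z : 𝕜} (hq0 : q ≠ 0) (hq : ‖q‖ < 1) (hz : z ≠ 0) :
    Summable fun n : ℕ ↦ ‖jacobiTerm q z n‖ := by
  have hratio : Tendsto (fun n : ℕ ↦ ‖q‖ ^ n * ‖z‖) atTop (𝓝 0) := by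
    simpa only [zero_mul] using
      (tendsto_pow_atTop_nhds_zero_of_lt_one (norm_nonneg q) hq).mul_const ‖z‖
  have hterm (n : ℕ) : ‖jacobiTerm q z n‖ ≠ 0 := norm_ne_zero_iff.2 (jacobiTerm_ne_zero hq0 hz n)
  refine summable_of_ratio_test_tendsto_lt_one zero_lt_one (.of_forall hterm)
    (hratio.congr fun n ↦ ?_)
  rw [norm_norm, norm_norm, eq_div_iff (hterm n), Nat.cast_succ, jacobiTerm_add_one hq0 hz,
    norm_mul, norm_mul, zpow_natCast, norm_pow]

lemma summable_norm_jacobiTerm {q z : 𝕜} (hq0 : q ≠ 0) (hq : ‖q‖ < 1) (hz : z ≠ 0) :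
    Summable fun k : ℤ ↦ ‖jacobiTerm q z k‖ := by
  refine .of_nat_of_neg (summable_norm_jacobiTerm_natCast hq0 hq hz) ?_
  simpa only [jacobiTerm_neg hq0] using
    summable_norm_jacobiTerm_natCast hq0 hq (div_ne_zero hq0 hz)

lemma summable_norm_mul_pow {q : 𝕜} (hq : ‖q‖ < 1) (a : 𝕜) :
    Summable fun n : ℕ ↦ ‖a * q ^ n‖ := by
  simpa only [norm_mul, norm_pow] using
    (summable_geometric_of_lt_one (norm_nonneg q) hq).mul_left ‖a‖

lemma one_sub_pow_succ_ne_zero {q : 𝕜} (hq : ‖q‖ < 1) (n : ℕ) : 1 - q ^ (n + 1) ≠ 0 := by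
  refine sub_ne_zero.2 fun h ↦ ?_
  have := pow_lt_one₀ (norm_nonneg q) hq n.succ_ne_zero
  rw [← norm_pow, ← h, norm_one] at this
  exact this.false

lemma qPochhammer_ne_zero {q : 𝕜} (hq : ‖q‖ < 1) (n : ℕ) : qPochhammer q n ≠ 0 :=
  Finset.prod_ne_zero_iff.2 fun i _ ↦ one_sub_pow_succ_ne_zero hq i

/-- The infinite `q`-Pochhammer symbol `(q; q)_∞`, i.e. Euler's product. -/
noncomputable def qPochhammerInf (q : 𝕜) : 𝕜 := ∏' n : ℕ, (1 - q ^ (n + 1))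

variable [CompleteSpace 𝕜]

lemma multipliable_one_add_mul_pow {q : 𝕜} (hq : ‖q‖ < 1) (a : 𝕜) :
    Multipliable fun n : ℕ ↦ 1 + a * q ^ n :=
  multipliable_one_add_of_summable (summable_norm_mul_pow hq a)

lemma multipliable_one_add_mul_pow_succ {q : 𝕜} (hq : ‖q‖ < 1) (a : 𝕜) :
    Multipliable fun n : ℕ ↦ 1 + a * q ^ (n + 1) := by
  simpa only [mul_assoc, ← pow_succ'] using multipliable_one_add_mul_pow hq (a * q)

lemma hasProd_qPochhammerInf {q : 𝕜} (hq : ‖q‖ < 1) :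
    HasProd (fun n : ℕ ↦ 1 - q ^ (n + 1)) (qPochhammerInf q) := by
  refine Multipliable.hasProd ?_
  simpa only [neg_one_mul, ← sub_eq_add_neg] using multipliable_one_add_mul_pow_succ hq (-1)

lemma qPochhammerInf_ne_zero {q : 𝕜} (hq : ‖q‖ < 1) : qPochhammerInf q ≠ 0 := by
  simp only [qPochhammerInf, sub_eq_add_neg, pow_succ', ← neg_mul]
  refine tprod_one_add_ne_zero_of_summable (fun n ↦ ?_) (summable_norm_mul_pow hq (-q))
  simpa only [neg_mul, ← pow_succ', ← sub_eq_add_neg] using one_sub_pow_succ_ne_zero hq n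

lemma tendsto_qPochhammer {q : 𝕜} (hq : ‖q‖ < 1) :
    Tendsto (qPochhammer q) atTop (𝓝 (qPochhammerInf q)) :=
  (hasProd_qPochhammerInf hq).tendsto_prod_nat

lemma exists_norm_qPochhammer_le {q : 𝕜} (hq : ‖q‖ < 1) : ∃ C, ∀ n, ‖qPochhammer q n‖ ≤ C := by
  obtain ⟨C, hC⟩ := (Metric.isBounded_range_of_tendsto _ (tendsto_qPochhammer hq)).exists_norm_le
  exact ⟨C, fun n ↦ hC _ (Set.mem_range_self n)⟩

lemma exists_norm_recipQPochhammer_le {q : 𝕜} (hq : ‖q‖ < 1) :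
    ∃ C, ∀ m, ‖recipQPochhammer q m‖ ≤ C := by
  obtain ⟨C, hC⟩ := (Metric.isBounded_range_of_tendsto _
    ((tendsto_qPochhammer hq).inv₀ (qPochhammerInf_ne_zero hq))).exists_norm_le
  have hC (n : ℕ) : ‖(qPochhammer q n)⁻¹‖ ≤ C := hC _ (Set.mem_range_self n)
  refine ⟨C, fun m ↦ ?_⟩
  cases m with
  | ofNat n => exact hC n
  | negSucc n => exact norm_zero.trans_le ((norm_nonneg _).trans (hC 0))

lemma tendsto_recipQPochhammer {q : 𝕜} (hq : ‖q‖ < 1) :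
    Tendsto (recipQPochhammer q) atTop (𝓝 (qPochhammerInf q)⁻¹) := by
  rw [← Nat.map_cast_int_atTop]
  exact tendsto_map'_iff.2 ((tendsto_qPochhammer hq).inv₀ (qPochhammerInf_ne_zero hq))

lemma tendsto_finiteJacobiTerm {q : 𝕜} (hq : ‖q‖ < 1) (z : 𝕜) (k : ℤ) :
    Tendsto (fun n ↦ finiteJacobiTerm q z n n k) atTop
      (𝓝 ((qPochhammerInf q)⁻¹ * jacobiTerm q z k)) := by
  have hcast : Tendsto (fun n : ℕ ↦ (n : ℤ)) atTop atTop := tendsto_natCast_atTop_atTop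
  have hdouble : Tendsto (fun n : ℕ ↦ n + n) atTop atTop :=
    tendsto_atTop_mono (fun n ↦ n.le_add_left n) tendsto_id
  have hleft : Tendsto (fun n : ℕ ↦ recipQPochhammer q (n - k)) atTop (𝓝 (qPochhammerInf q)⁻¹) :=
    (tendsto_recipQPochhammer hq).comp (tendsto_atTop_add_const_right _ (-k) hcast)
  have hright : Tendsto (fun n : ℕ ↦ recipQPochhammer q (n + k)) atTop (𝓝 (qPochhammerInf q)⁻¹) :=
    (tendsto_recipQPochhammer hq).comp (tendsto_atTop_add_const_right _ k hcast)
  have := ((((tendsto_qPochhammer hq).comp hdouble).mul hleft).mul hright).mul_const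
    (jacobiTerm q z k)
  rwa [mul_inv_cancel₀ (qPochhammerInf_ne_zero hq), one_mul] at this

lemma exists_norm_finiteJacobiTerm_le {q : 𝕜} (hq : ‖q‖ < 1) (z : 𝕜) :
    ∃ C, ∀ m n k, ‖finiteJacobiTerm q z m n k‖ ≤ C * ‖jacobiTerm q z k‖ := by
  obtain ⟨A, hA⟩ := exists_norm_qPochhammer_le hq
  obtain ⟨B, hB⟩ := exists_norm_recipQPochhammer_le hq
  have hA0 : 0 ≤ A := (norm_nonneg _).trans (hA 0)
  have hB0 : 0 ≤ B := (norm_nonneg _).trans (hB 0)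
  refine ⟨A * B * B, fun m n k ↦ ?_⟩
  rw [finiteJacobiTerm, norm_mul, norm_mul, norm_mul]
  gcongr
  exacts [hA _, hB _, hB _]

lemma multipliable_jacobiTripleProduct {q : 𝕜} (hq : ‖q‖ < 1) (z : 𝕜) :
    Multipliable fun n : ℕ ↦ (1 - q ^ (n + 1)) * ((1 + z * q ^ n) * (1 + z⁻¹ * q ^ (n + 1))) :=
  (hasProd_qPochhammerInf hq).multipliable.mul
    ((multipliable_one_add_mul_pow hq z).mul (multipliable_one_add_mul_pow_succ hq z⁻¹))

theorem hasSum_jacobiTerm {q z : 𝕜} (hq0 : q ≠ 0) (hq : ‖q‖ < 1) (hz : z ≠ 0) :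
    HasSum (jacobiTerm q z)
      (∏' n : ℕ, (1 - q ^ (n + 1)) * ((1 + z * q ^ n) * (1 + z⁻¹ * q ^ (n + 1)))) := by
  have hsummable := summable_norm_jacobiTerm hq0 hq hz
  have hleft := multipliable_one_add_mul_pow hq z
  have hright := multipliable_one_add_mul_pow_succ hq z⁻¹
  obtain ⟨C, hC⟩ := exists_norm_finiteJacobiTerm_le hq z
  have hseries := tendsto_tsum_of_dominated_convergence (hsummable.mul_left C)
    (tendsto_finiteJacobiTerm hq z) (.of_forall fun n k ↦ hC n n k)
  have hproduct := hleft.hasProd.tendsto_prod_nat.mul hright.hasProd.tendsto_prod_nat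
  simp only [(hasSum_finiteJacobiTerm hq0 (qPochhammer_ne_zero hq) hz _ _).tsum_eq] at hseries
  have hlim := tendsto_nhds_unique hproduct hseries
  rw [tsum_mul_left, eq_inv_mul_iff_mul_eq₀ (qPochhammerInf_ne_zero hq)] at hlim
  rw [(hasProd_qPochhammerInf hq).multipliable.tprod_mul (hleft.mul hright),
    hleft.tprod_mul hright]
  exact hlim ▸ hsummable.of_norm.hasSum

theorem hasSum_pentagonal {q : 𝕜} (hq0 : q ≠ 0) (hq : ‖q‖ < 1) :
    HasSum (fun k : ℤ ↦ (-1) ^ k * q ^ pentagonal k) (qPochhammerInf q) := by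
  have hterm (k : ℤ) : jacobiTerm (q ^ 3) (-q) k = (-1) ^ k * q ^ pentagonal k := by
    have hk : 3 * (k * (k - 1) / 2) + k = pentagonal k := by
      have := Int.two_mul_ediv_two_of_even k.even_mul_pred_self
      linarith [two_mul_natCast_pentagonal k]
    rw [jacobiTerm, ← zpow_natCast q (pentagonal k), ← hk, zpow_add₀ hq0, zpow_mul,
      neg_eq_neg_one_mul q, mul_zpow, mul_left_comm, zpow_ofNat]
  have htriple := hasSum_jacobiTerm (pow_ne_zero 3 hq0)
    (by simpa using pow_lt_one₀ (norm_nonneg q) hq three_ne_zero) (neg_ne_zero.2 hq0)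
  rw [funext hterm] at htriple
  convert htriple using 1
  rw [← (hasProd_prod_range_mul_add (hasProd_qPochhammerInf hq) 3).tprod_eq]
  refine tprod_congr fun n ↦ ?_
  simp only [Finset.prod_range_succ, Finset.prod_range_zero]
  field_simp
  ring

theorem hasSum_hexagonal {q : 𝕜} (hq0 : q ≠ 0) (hq : ‖q‖ < 1) :
    HasSum (fun k : ℤ ↦ (-1) ^ k * q ^ (k * (2 * k + 1)))
      (qPochhammerInf q * qPochhammerInf (q ^ 4) / qPochhammerInf (q ^ 2)) := by
  have hpow (n : ℕ) [NeZero n] : ‖q ^ n‖ < 1 := by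
    simpa using pow_lt_one₀ (norm_nonneg q) hq (NeZero.ne n)
  have hterm (k : ℤ) : jacobiTerm (q ^ 4) (-q ^ 3) k = (-1) ^ k * q ^ (k * (2 * k + 1)) := by
    have hk : 4 * (k * (k - 1) / 2) + 3 * k = k * (2 * k + 1) := by
      linarith [Int.two_mul_ediv_two_of_even k.even_mul_pred_self]
    rw [jacobiTerm, ← hk, zpow_add₀ hq0, zpow_mul, zpow_mul, neg_eq_neg_one_mul (q ^ 3), mul_zpow,
      mul_left_comm, zpow_ofNat, zpow_ofNat]
  have htriple := hasSum_jacobiTerm (pow_ne_zero 4 hq0) (hpow 4) (neg_ne_zero.2 (pow_ne_zero 3 hq0))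
  rw [funext hterm] at htriple
  convert htriple using 1
  have h4 := hasProd_qPochhammerInf (hpow 4)
  have h2 := hasProd_prod_range_mul_add (hasProd_qPochhammerInf (hpow 2)) 2
  have h1 := hasProd_prod_range_mul_add (hasProd_qPochhammerInf hq) 4
  rw [div_eq_iff (qPochhammerInf_ne_zero (hpow 2))]
  refine (h1.mul h4).unique ?_
  convert! (multipliable_jacobiTripleProduct (hpow 4) (-q ^ 3)).hasProd.mul h2 using 2 with n
  simp only [Finset.prod_range_succ, Finset.prod_range_zero]
  field_simp
  ring

end Analytic

section Eta

open Complex hiding eta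

lemma norm_cexp_two_pi_I_mul_lt_one {w : ℂ} (hw : 0 < w.im) : ‖cexp (2 * π * I * w)‖ < 1 :=
  UpperHalfPlane.norm_exp_two_pi_I_lt_one ⟨w, hw⟩

lemma eta_eq_qPochhammerInf (w : ℂ) :
    eta w = cexp (π * I * w / 12) * qPochhammerInf (cexp (2 * π * I * w)) := by
  rw [eta, qPochhammerInf]
  congr! 4 with n
  rw [← exp_nat_mul]
  push_cast
  ring_nf

lemma eta_eq_modularForm_eta (w : ℂ) : eta w = ModularForm.eta w := by
  simp only [eta, ModularForm.eta, ModularForm.eta_q_eq_cexp, Function.Periodic.qParam]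
  push_cast
  ring_nf

lemma eta_ne_zero {w : ℂ} (hw : 0 < w.im) : eta w ≠ 0 :=
  eta_eq_modularForm_eta w ▸ ModularForm.eta_ne_zero hw

lemma pi_I_mul_inv_mul_I (t : ℂ) : π * I * (t⁻¹ * I) = -π / t := by
  linear_combination π * t⁻¹ * I_mul_I

lemma im_inv_mul_I_pos {t : ℂ} (ht : 0 < t.re) : 0 < (t⁻¹ * I).im := by
  have := normSq_pos.2 (ne_zero_of_re_pos ht)
  simp only [mul_I_im, inv_re]
  positivity

theorem hasSum_eta {w : ℂ} (hw : 0 < w.im) :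
    HasSum (fun k : ℤ ↦ (-1) ^ k * cexp (π * I * w * ((6 * k - 1) ^ 2 / 12))) (eta w) := by
  rw [eta_eq_qPochhammerInf]
  convert! (hasSum_pentagonal (exp_ne_zero _) (norm_cexp_two_pi_I_mul_lt_one hw)).mul_left
    (cexp (π * I * w / 12)) using 2 with k
  have hk : 2 * (pentagonal k : ℂ) = k * (3 * k - 1) := mod_cast two_mul_natCast_pentagonal k
  rw [← exp_nat_mul, mul_left_comm, ← Complex.exp_add]
  congr 2
  linear_combination (-(π * I * w)) * hk

theorem hasSum_eta_mul_eta_four_div_eta_two {w : ℂ} (hw : 0 < w.im) :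
    HasSum (fun k : ℤ ↦ (-1) ^ k * cexp (π * I * w * ((4 * k + 1) ^ 2 / 4)))
      (eta w * eta (4 * w) / eta (2 * w)) := by
  have hpow (n : ℕ) : cexp (2 * π * I * (n * w)) = cexp (2 * π * I * w) ^ n := by
    rw [← exp_nat_mul, mul_left_comm]
  have hfactor : cexp (π * I * w / 4) =
      cexp (π * I * w / 12) * cexp (π * I * (4 * w) / 12) / cexp (π * I * (2 * w) / 12) := by
    rw [← Complex.exp_add, ← Complex.exp_sub]
    ring_nf
  convert! (hasSum_hexagonal (exp_ne_zero _) (norm_cexp_two_pi_I_mul_lt_one hw)).mul_left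
    (cexp (π * I * w / 4)) using 1
  · ext k
    rw [← exp_int_mul, mul_left_comm, ← Complex.exp_add]
    push_cast
    ring_nf
  · simp only [eta_eq_qPochhammerInf, ← hpow, hfactor]
    push_cast
    ring

lemma csqrt_mul {a b : ℂ} (ha : a ≠ 0) (hb : b ≠ 0) (h : arg a + arg b ∈ Set.Ioc (-π) π) :
    sqrt (a * b) = sqrt a * sqrt b := by
  rw [sqrt_eq_exp (mul_ne_zero ha hb), sqrt_eq_exp ha, sqrt_eq_exp hb, log_mul ha hb h, add_div,
    Complex.exp_add]

lemma csqrt_ofReal {r : ℝ} (hr : 0 ≤ r) : sqrt r = √r := by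
  rw [Complex.sqrt_of_nonneg (zero_le_real.2 hr), ofReal_re]

lemma csqrt_ofReal_mul {r : ℝ} (hr : 0 < r) {t : ℂ} (ht : t ≠ 0) :
    sqrt (r * t) = √r * sqrt t := by
  rw [csqrt_mul (ofReal_ne_zero.2 hr.ne') ht, csqrt_ofReal hr.le]
  rw [arg_ofReal_of_nonneg hr.le, zero_add]
  exact ⟨neg_pi_lt_arg t, arg_le_pi t⟩

lemma eta_inv_mul_I {t : ℂ} (ht : 0 < t.re) : eta (t⁻¹ * I) = sqrt t * eta (t * I) := by
  have ht0 : t ≠ 0 := ne_zero_of_re_pos ht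
  have harg := abs_lt.1 (abs_arg_lt_pi_div_two_iff.2 (.inl ht))
  have hsqrt : sqrt (t * I) = sqrt t * sqrt I :=
    csqrt_mul ht0 I_ne_zero (by rw [arg_I]; constructor <;> linarith)
  have hS := ModularForm.eta_comp_eq_csqrt_I_inv (x := t * I) (by simpa using ht)
  have hinv : -1 / (t * I) = t⁻¹ * I := by
    field_simp
    simp
  have hI : sqrt I ≠ 0 := by simp [sqrt]
  simp only [Function.comp_apply, Pi.smul_apply, Pi.mul_apply, smul_eq_mul, hinv, hsqrt] at hS
  rw [eta_eq_modularForm_eta, eta_eq_modularForm_eta, hS]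
  field_simp

theorem hasSum_csqrt_mul_eta_mul_I {t : ℂ} (ht : 0 < t.re) :
    HasSum (fun k : ℤ ↦ (-1) ^ k * cexp (-π / t * ((6 * k - 1) ^ 2 / 12)))
      (sqrt t * eta (t * I)) := by
  rw [← eta_inv_mul_I ht]
  convert! hasSum_eta (im_inv_mul_I_pos ht) using 5 with k
  rw [pi_I_mul_inv_mul_I]

theorem hasSum_csqrt_mul_eta_quotient {t : ℂ} (ht : 0 < t.re) :
    HasSum (fun k : ℤ ↦ (-1) ^ k * cexp (-π / t * ((4 * k + 1) ^ 2 / 4)))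
      (sqrt (t / 2) * (eta (t * I) * eta (t / 4 * I) / eta (t / 2 * I))) := by
  have ht2 : 0 < (t / 2).re := by simpa using ht
  have ht4 : 0 < (t / 4).re := by simpa using ht
  have ht0 : t / 2 ≠ 0 := ne_zero_of_re_pos ht2
  have hsqrt : sqrt t * sqrt (t / 4) = sqrt (t / 2) * sqrt (t / 2) := by
    have hdouble : sqrt t = √2 * sqrt (t / 2) := by
      rw [← csqrt_ofReal_mul two_pos ht0, ofReal_ofNat, mul_div_cancel₀ _ two_ne_zero]
    have hhalf : sqrt (t / 4) = √2⁻¹ * sqrt (t / 2) := by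
      rw [← csqrt_ofReal_mul (by positivity) ht0]
      push_cast
      ring_nf
    rw [hdouble, hhalf, mul_mul_mul_comm, ← ofReal_mul, ← Real.sqrt_mul zero_le_two]
    simp
  convert! hasSum_eta_mul_eta_four_div_eta_two (w := t⁻¹ * I) (im_inv_mul_I_pos ht) using 1
  · simp only [pi_I_mul_inv_mul_I]
  · have h4 : 4 * (t⁻¹ * I) = (t / 4)⁻¹ * I := by rw [inv_div]; ring
    have h2 : 2 * (t⁻¹ * I) = (t / 2)⁻¹ * I := by rw [inv_div]; ring
    have hne : sqrt (t / 2) ≠ 0 := by simp [sqrt, ht0]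
    rw [h4, h2, eta_inv_mul_I ht, eta_inv_mul_I ht2, eta_inv_mul_I ht4, mul_mul_mul_comm, hsqrt]
    field_simp

theorem one_arm_eta_identity_general {τ : ℂ} (hτ : 0 < τ.re) :
    (1 - √(3 / 2) * (eta (6 * τ * I) * eta (3 / 2 * τ * I)) /
        (eta (2 * τ * I) * eta (3 * τ * I))) * eta (2 * τ * I) =
      1 / sqrt (2 * τ) * cexp (-π / τ * (1 / 24)) *
        ∑' k : ℤ, (-1) ^ k * (cexp (-π / τ * ((3 * k ^ 2 - k) / 2)) -
          cexp (-π / τ * ((2 * k ^ 2 + k) / 3))) := by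
  have hτ0 : τ ≠ 0 := ne_zero_of_re_pos hτ
  have hpentagonal := hasSum_csqrt_mul_eta_mul_I (t := 2 * τ) (by simpa using hτ)
  have hgauss := hasSum_csqrt_mul_eta_quotient (t := 6 * τ) (by simpa using hτ)
  have hterm (k : ℤ) : cexp (-π / τ * (1 / 24)) * ((-1) ^ k *
      (cexp (-π / τ * ((3 * k ^ 2 - k) / 2)) - cexp (-π / τ * ((2 * k ^ 2 + k) / 3)))) =
      (-1) ^ k * cexp (-π / (2 * τ) * ((6 * k - 1) ^ 2 / 12)) -
        (-1) ^ k * cexp (-π / (6 * τ) * ((4 * k + 1) ^ 2 / 4)) := by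
    rw [mul_left_comm, mul_sub, ← Complex.exp_add, ← Complex.exp_add, mul_sub]
    ring_nf
  have hsqrt : sqrt (6 * τ / 2) = √(3 / 2) * sqrt (2 * τ) := by
    rw [← csqrt_ofReal_mul (by positivity) (mul_ne_zero two_ne_zero hτ0)]
    push_cast
    ring_nf
  have hne : sqrt (2 * τ) ≠ 0 := by simp [sqrt, hτ0]
  have heta : eta (2 * τ * I) ≠ 0 := eta_ne_zero (by simpa using hτ)
  rw [mul_assoc (1 / _), ← tsum_mul_left, tsum_congr hterm, (hpentagonal.sub hgauss).tsum_eq, hsqrt,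
    show 6 * τ / 4 = 3 / 2 * τ by ring, show 6 * τ / 2 = 3 * τ by ring]
  generalize eta (2 * τ * I) = e at heta ⊢
  generalize sqrt (2 * τ) = s at hne ⊢
  field_simp

lemma ofReal_exp_rpow (a b : ℝ) : ((Real.exp a ^ b : ℝ) : ℂ) = cexp (a * b) := by
  rw [← Real.exp_mul, ofReal_exp, ofReal_mul]

end Eta

theorem one_arm_eta_identity (τ : ℝ) (hτ : 0 < τ) :
    (1 - (Real.sqrt (3 / 2) : ℂ) *
        (eta (6 * τ * Complex.I) * eta ((3 / 2) * τ * Complex.I)) /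
        (eta (2 * τ * Complex.I) * eta (3 * τ * Complex.I))) * eta (2 * τ * Complex.I) =
      ((1 / Real.sqrt (2 * τ) : ℝ) : ℂ) *
        ((Real.exp (-Real.pi / τ) ^ ((1 : ℝ) / 24) : ℝ) : ℂ) *
        ∑' k : ℤ, ((-1 : ℝ) ^ k *
          (Real.exp (-Real.pi / τ) ^ ((3 * (k : ℝ) ^ 2 - (k : ℝ)) / 2) -
            Real.exp (-Real.pi / τ) ^ ((2 * (k : ℝ) ^ 2 + (k : ℝ)) / 3)) : ℝ) := by
  have hsqrt := csqrt_ofReal (r := 2 * τ) (by positivity)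
  rw [one_arm_eta_identity_general (τ := τ) hτ, Complex.ofReal_tsum]
  push_cast [ofReal_exp_rpow, ← hsqrt]
  rfl
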